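/- Let A ∈ ℝ^{m×n}, b ∈ ℝ^m, and let c, c' ∈ ℝⁿ be two cost vectors such that both LP(c) and LP(c') have finite optimum values. Let s' ∈ ℝⁿ be an optimal dual slack for LP(c'), i.e., s' ≥ 0, s' − c' ∈ Im(Aᵀ), and ⟨s', x'⟩ = 0 for some optimal solution x' of LP(c'). Then for every index j ∈ [n] with s'_j > (m+1) · κ_A · ‖c − c'‖_∞, every optimal solution x* of LP(c) satisfies x*_j = 0. -/

import Mathlib

open Matrix
open scoped BigOperators

noncomputable section
open Classical

/-- The set of elementary vectors of `ker(A)`: support-minimal nonzero kernel vectors. -/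
def elemVecs {α β : Type} [Fintype α] [Fintype β] (A : Matrix α β ℝ) : Set (β → ℝ) :=
  {g | A.mulVec g = 0 ∧ g ≠ 0 ∧
    ∀ h : β → ℝ, A.mulVec h = 0 → h ≠ 0 →
      ¬ ({i | h i ≠ 0} ⊂ {i | g i ≠ 0})}

/-- The circuit imbalance measure `κ_A`. -/
def circImb {α β : Type} [Fintype α] [Fintype β] (A : Matrix α β ℝ) : ℝ :=
  sSup {r : ℝ | ∃ g ∈ elemVecs A, ∃ i j, g i ≠ 0 ∧ g j ≠ 0 ∧ r = |g j| / |g i|}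

/-- The ℓ∞-norm of a vector in `ℝⁿ`. -/
def normInf {n : ℕ} (v : Fin n → ℝ) : ℝ :=
  sSup (Set.range fun i => |v i|)

/-!
Let `x` be optimal for `LP(c)` with `x j > 0`. Complementary slackness gives `x' j = 0`, so the
kernel vector `x - x'` is nonzero at `j`, and there is an elementary vector `g` with `g j ≠ 0` whose
nonzero entries have the same signs as those of `x - x'`. Moving from `x` a little along `-g` stays
feasible, hence `⟨c, g⟩ ≤ 0`. On the other hand `s' i * g i ≥ 0` for all `i`, because `g i < 0`
forces `x' i > 0` and thus `s' i = 0`. Therefore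
`s' j * g j ≤ ⟨s', g⟩ = ⟨c', g⟩ ≤ ⟨c' - c, g⟩ ≤ ‖c - c'‖ * ∑ i, |g i|`.
The support of `g` has at most `rank A + 1` elements, and each `|g i|` is at most `κ_A * g j`.
-/

open Function Topology

section Conformal

/-- `g` conforms to `z` if every nonzero entry of `g` has the same sign as the corresponding entry
of `z`, which is then nonzero. -/
def ConformsTo {ι R : Type*} [Mul R] [Zero R] [LT R] (g z : ι → R) : Prop :=
  ∀ i, g i ≠ 0 → 0 < g i * z i

lemma ConformsTo.support_subset {ι R : Type*} [MulZeroClass R] [Preorder R] {g z : ι → R}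
    (hgz : ConformsTo g z) : support g ⊆ support z :=
  fun i hi => right_ne_zero_of_mul (hgz i hi).ne'

variable {ι K : Type*} [Field K] [LinearOrder K] [IsStrictOrderedRing K] {g h w z : ι → K}

lemma ConformsTo.refl (g : ι → K) : ConformsTo g g := fun _ hi => mul_self_pos.2 hi

lemma ConformsTo.trans (hgw : ConformsTo g w) (hwz : ConformsTo w z) : ConformsTo g z := by
  intro i hi
  have hgw_pos := hgw i hi
  have hwz_pos := hwz i (right_ne_zero_of_mul hgw_pos.ne')
  have hprod_pos : 0 < g i * z i * (w i * w i) := by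
    calc 0 < g i * w i * (w i * z i) := mul_pos hgw_pos hwz_pos
      _ = g i * z i * (w i * w i) := by ring
  exact pos_of_mul_pos_left hprod_pos (mul_self_nonneg _)

lemma conformsTo_sub_of_abs_le (hle : ∀ i, |h i| ≤ |g i|) : ConformsTo (g - h) g := by
  intro i hi
  have hgi : g i ≠ 0 := by
    intro hg0
    have hh0 : h i = 0 := abs_nonpos_iff.1 ((hle i).trans_eq (by rw [hg0, abs_zero]))
    exact hi (by rw [Pi.sub_apply, hg0, hh0, sub_zero])
  have hmul_le : h i * g i ≤ g i * g i := by
    calc h i * g i ≤ |h i| * |g i| := (le_abs_self _).trans_eq (abs_mul _ _)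
      _ ≤ |g i| * |g i| := mul_le_mul_of_nonneg_right (hle i) (abs_nonneg _)
      _ = g i * g i := abs_mul_abs_self _
  have hnonneg : 0 ≤ (g - h) i * g i := by
    rw [Pi.sub_apply, sub_mul]
    exact sub_nonneg.2 hmul_le
  exact hnonneg.lt_of_ne (mul_ne_zero hi hgi).symm

lemma exists_conformsTo_sub_smul [Finite ι] (hh : h ≠ 0) (hsub : support h ⊆ support g) :
    ∃ t : K, ConformsTo (g - t • h) g ∧ support (g - t • h) ⊂ support g := by
  obtain ⟨k, hk, hmin⟩ :=
    (support h).toFinite.exists_minimalFor (fun i => |g i| / |h i|) _ (support_nonempty_iff.2 hh)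
  have hle : ∀ i, |((g k / h k) • h) i| ≤ |g i| := by
    intro i
    rw [Pi.smul_apply, smul_eq_mul, abs_mul, abs_div]
    obtain hi | hi := eq_or_ne (h i) 0
    · simp [hi]
    · exact (le_div_iff₀ (abs_pos.2 hi)).1 ((le_total _ _).elim id (hmin hi))
  have hconf := conformsTo_sub_of_abs_le hle
  have hkill : (g - (g k / h k) • h) k = 0 := by
    rw [Pi.sub_apply, Pi.smul_apply, smul_eq_mul, div_mul_cancel₀ _ hk, sub_self]
  exact ⟨g k / h k, hconf, hconf.support_subset, fun hge => hge (hsub hk) hkill⟩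

lemma exists_conformsTo_support_ssubset {α : Type*} [Fintype ι] {A : Matrix α ι K} {j : ι}
    (hz : A *ᵥ z = 0) (hzj : z j ≠ 0) (hh : A *ᵥ h = 0) (hne : h ≠ 0)
    (hss : support h ⊂ support z) :
    ∃ w, A *ᵥ w = 0 ∧ w j ≠ 0 ∧ ConformsTo w z ∧ support w ⊂ support z := by
  have hker : ∀ (u : ι → K) (t : K), A *ᵥ u = 0 → A *ᵥ (z - t • u) = 0 := fun u t hu => by
    rw [mulVec_sub, mulVec_smul, hz, hu, smul_zero, sub_zero]
  obtain ⟨t, hconf, hss_t⟩ := exists_conformsTo_sub_smul hne hss.subset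
  set w := z - t • h with hw
  by_cases hwj : w j = 0
  -- `w` is nonzero but vanishes at `j`, so subtracting a multiple of `w` from `z` keeps `z j`.
  · have hw_ne : w ≠ 0 := by
      obtain ⟨k, hzk, hhk⟩ := Set.exists_of_ssubset hss
      have hwk : w k = z k := by simp [hw, notMem_support.1 hhk]
      exact ne_iff.2 ⟨k, hwk.trans_ne hzk⟩
    obtain ⟨r, hconf_r, hss_r⟩ := exists_conformsTo_sub_smul hw_ne hss_t.subset
    exact ⟨z - r • w, hker w r (hker h t hh), by simpa [hwj] using hzj, hconf_r, hss_r⟩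
  · exact ⟨w, hker h t hh, hwj, hconf, hss_t⟩

end Conformal

section ElementaryVectors

variable {α β : Type} [Fintype α] [Fintype β] {A : Matrix α β ℝ} {g h z : β → ℝ} {i j : β}

lemma eq_zero_of_mem_elemVecs_of_support_ssubset (hg : g ∈ elemVecs A) (hh : A *ᵥ h = 0)
    (hss : support h ⊂ support g) : h = 0 :=
  by_contra fun hne => hg.2.2 h hh hne hss

theorem exists_mem_elemVecs_conformsTo (hz : A *ᵥ z = 0) (hzj : z j ≠ 0) :
    ∃ g ∈ elemVecs A, g j ≠ 0 ∧ ConformsTo g z := by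
  obtain ⟨g, ⟨hg, hgj, hgz⟩, hmin⟩ := exists_minimalFor_of_wellFoundedLT
    (fun w : β → ℝ => A *ᵥ w = 0 ∧ w j ≠ 0 ∧ ConformsTo w z) support ⟨z, hz, hzj, .refl z⟩
  refine ⟨g, ⟨hg, ne_iff.2 ⟨j, hgj⟩, fun h hh hne hss => ?_⟩, hgj, hgz⟩
  obtain ⟨w, hw, hwj, hwg, hss_w⟩ := exists_conformsTo_support_ssubset hg hgj hh hne hss
  exact hss_w.not_subset (hmin ⟨hw, hwj, hwg.trans hgz⟩ hss_w.subset)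

lemma smul_eq_smul_of_mem_elemVecs_of_support_eq (hg : g ∈ elemVecs A) (hh : h ∈ elemVecs A)
    (hsupp : support g = support h) (hi : g i ≠ 0) : h i • g = g i • h := by
  have hker : A *ᵥ (h i • g - g i • h) = 0 := by
    rw [mulVec_sub, mulVec_smul, mulVec_smul, hg.1, hh.1, smul_zero, smul_zero, sub_zero]
  have hsub : support (h i • g - g i • h) ⊆ support g := by
    intro k hk hgk
    have hhk : h k = 0 := notMem_support.1 (hsupp ▸ notMem_support.2 hgk)
    exact hk (by simp [hgk, hhk])
  have hvanish : (h i • g - g i • h) i = 0 := by simp [mul_comm]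
  exact sub_eq_zero.1 <|
    eq_zero_of_mem_elemVecs_of_support_ssubset hg hker ⟨hsub, fun hle => hle hi hvanish⟩

lemma finite_setOf_elemVecs_ratio (A : Matrix α β ℝ) :
    {r : ℝ | ∃ g ∈ elemVecs A, ∃ i j, g i ≠ 0 ∧ g j ≠ 0 ∧ r = |g j| / |g i|}.Finite := by
  let ratios (p : Set β × β × β) : Set ℝ :=
    {r | ∃ g ∈ elemVecs A, support g = p.1 ∧ g p.2.1 ≠ 0 ∧ r = |g p.2.2| / |g p.2.1|}
  have hsubsingleton : ∀ p, (ratios p).Subsingleton := by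
    rintro ⟨S, i, j⟩ _ ⟨g, hg, hgS, hgi, rfl⟩ _ ⟨h, hh, hhS, hhi, rfl⟩
    have hprop : h i * g j = g i * h j :=
      congrFun (smul_eq_smul_of_mem_elemVecs_of_support_eq hg hh (hgS.trans hhS.symm) hgi) j
    rw [← abs_div, ← abs_div, (div_eq_div_iff hgi hhi).2 (by linarith)]
  refine (Set.finite_iUnion fun p => (hsubsingleton p).finite).subset ?_
  rintro r ⟨g, hg, i, j, hi, -, rfl⟩
  exact Set.mem_iUnion.2 ⟨(support g, i, j), g, hg, rfl, hi, rfl⟩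

lemma circImb_nonneg (A : Matrix α β ℝ) : 0 ≤ circImb A :=
  Real.sSup_nonneg <| by
    rintro _ ⟨g, -, i, j, -, -, rfl⟩
    positivity

lemma abs_le_circImb_mul_abs (hg : g ∈ elemVecs A) (hj : g j ≠ 0) (i : β) :
    |g i| ≤ circImb A * |g j| := by
  obtain hi | hi := eq_or_ne (g i) 0
  · rw [hi, abs_zero]
    exact mul_nonneg (circImb_nonneg A) (abs_nonneg _)
  · exact (div_le_iff₀ (abs_pos.2 hj)).1 <|
      le_csSup (finite_setOf_elemVecs_ratio A).bddAbove ⟨g, hg, j, i, hj, hi, rfl⟩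

lemma ncard_le_rank_of_linearIndepOn_col {m n K : Type*} [Finite m] [Fintype n] [Field K]
    {M : Matrix m n K} {s : Set n} (hs : LinearIndepOn K M.col s) : s.ncard ≤ M.rank := by
  have hspan : Module.finrank K (Submodule.span K (Set.range fun i : s => M.col i)) = s.ncard :=
    (finrank_span_eq_card hs).trans (Set.ncard_eq_toFinset_card' s ▸ (Set.toFinset_card s).symm)
  rw [← hspan, rank_eq_finrank_span_cols]
  exact Submodule.finrank_mono (Submodule.span_mono (Set.range_comp_subset_range _ _))

lemma linearIndepOn_col_support_diff_singleton (hg : g ∈ elemVecs A) (hj : g j ≠ 0) :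
    LinearIndepOn ℝ A.col (support g \ {j}) := by
  rw [linearIndepOn_iff]
  intro l hl hsum
  have hker : A *ᵥ l = 0 := by
    rw [mulVec_eq_sum, ← hsum, Finsupp.linearCombination_apply, Finsupp.sum_fintype _ _ (by simp)]
    simp [Matrix.col_def]
  have hsub : support l ⊆ support g \ {j} := by
    rwa [Finsupp.fun_support_eq]
  have hss : support l ⊂ support g :=
    ⟨hsub.trans Set.sdiff_subset, fun hle => (hsub (hle hj)).2 rfl⟩
  exact DFunLike.coe_injective (eq_zero_of_mem_elemVecs_of_support_ssubset hg hker hss)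

lemma ncard_support_le_rank_add_one (hg : g ∈ elemVecs A) :
    (support g).ncard ≤ A.rank + 1 := by
  obtain ⟨j, hj⟩ := ne_iff.1 hg.2.1
  rw [← Set.ncard_sdiff_singleton_add_one (a := j) hj]
  gcongr
  exact ncard_le_rank_of_linearIndepOn_col (linearIndepOn_col_support_diff_singleton hg hj)

theorem sum_abs_le_rank_mul_circImb (hg : g ∈ elemVecs A) (hj : g j ≠ 0) :
    ∑ i, |g i| ≤ (A.rank + 1) * circImb A * |g j| := by
  have hsupp : ∑ i, |g i| = ∑ i ∈ (support g).toFinset, |g i| :=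
    (Finset.sum_subset (Finset.subset_univ _) fun i _ hi => by simpa using hi).symm
  have hcard : ((support g).toFinset.card : ℝ) ≤ A.rank + 1 := by
    rw [← Set.ncard_eq_toFinset_card']
    exact_mod_cast ncard_support_le_rank_add_one hg
  have hκ := circImb_nonneg A
  calc ∑ i, |g i| ≤ (support g).toFinset.card • (circImb A * |g j|) :=
        hsupp.trans_le (Finset.sum_le_card_nsmul _ _ _ fun i _ => abs_le_circImb_mul_abs hg hj i)
    _ ≤ (A.rank + 1) * (circImb A * |g j|) := by rw [nsmul_eq_mul]; gcongr
    _ = (A.rank + 1) * circImb A * |g j| := (mul_assoc _ _ _).symm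

end ElementaryVectors

section Norms

lemma dotProduct_le_norm_mul_sum_abs {ι : Type*} [Fintype ι] (u v : ι → ℝ) :
    u ⬝ᵥ v ≤ ‖u‖ * ∑ i, |v i| := by
  rw [Finset.mul_sum]
  refine Finset.sum_le_sum fun i _ => ?_
  calc u i * v i ≤ |u i| * |v i| := (le_abs_self _).trans_eq (abs_mul _ _)
    _ ≤ ‖u‖ * |v i| := by gcongr; exact norm_le_pi_norm u i

lemma normInf_eq_norm {n : ℕ} (v : Fin n → ℝ) : normInf v = ‖v‖ := by
  refine le_antisymm (Real.sSup_le ?_ (norm_nonneg v)) ?_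
  · rintro _ ⟨i, rfl⟩
    exact norm_le_pi_norm v i
  · refine (pi_norm_le_iff_of_nonneg ?_).2 fun i => ?_
    · exact Real.sSup_nonneg (by rintro _ ⟨i, rfl⟩; exact abs_nonneg _)
    · exact le_csSup (Set.finite_range _).bddAbove ⟨i, rfl⟩

end Norms

section LinearProgram

/-- The feasible region `{z | A z = b, z ≥ 0}` of the linear programs `LP(c)`, for any cost `c`. -/
def feasibleSet {α β : Type*} [Fintype β] (A : Matrix α β ℝ) (b : α → ℝ) : Set (β → ℝ) :=
  {z | A *ᵥ z = b ∧ 0 ≤ z}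

lemma exists_pos_smul_le {ι : Type*} [Finite ι] {g x : ι → ℝ} (hx : 0 ≤ x)
    (hpos : ∀ i, 0 < g i → 0 < x i) : ∃ ε : ℝ, 0 < ε ∧ ε • g ≤ x := by
  have hall : ∀ᶠ ε : ℝ in 𝓝[>] 0, ∀ i, ε * g i ≤ x i := by
    refine Filter.eventually_all.2 fun i => ?_
    obtain hgi | hgi := lt_or_ge 0 (g i)
    · have hlim : Filter.Tendsto (fun ε : ℝ => ε * g i) (𝓝[>] 0) (𝓝 0) :=
        ((continuous_mul_const (g i)).tendsto' 0 0 (zero_mul _)).mono_left nhdsWithin_le_nhds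
      exact (hlim.eventually_lt_const (hpos i hgi)).mono fun _ => le_of_lt
    · filter_upwards [self_mem_nhdsWithin] with ε hε
      exact (mul_nonpos_of_nonneg_of_nonpos (le_of_lt hε) hgi).trans (hx i)
  obtain ⟨ε, hle, hε⟩ := (hall.and self_mem_nhdsWithin).exists
  exact ⟨ε, hε, hle⟩

lemma dotProduct_eq_of_sub_eq_transpose_mulVec {α β R : Type*} [Fintype α] [Fintype β]
    [CommRing R] {A : Matrix α β R} {c g s : β → R} {y : α → R} (hs : s - c = Aᵀ *ᵥ y)
    (hg : A *ᵥ g = 0) : s ⬝ᵥ g = c ⬝ᵥ g := by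
  rw [← sub_eq_zero, ← sub_dotProduct, hs, mulVec_transpose, ← dotProduct_mulVec, hg,
    dotProduct_zero]

lemma mul_eq_zero_of_dotProduct_eq_zero {ι : Type*} [Fintype ι] {s x : ι → ℝ} (hs : 0 ≤ s)
    (hx : 0 ≤ x) (hsx : s ⬝ᵥ x = 0) (i : ι) : s i * x i = 0 :=
  (Finset.sum_eq_zero_iff_of_nonneg fun i _ => mul_nonneg (hs i) (hx i)).1 hsx i
    (Finset.mem_univ i)

lemma mul_nonneg_of_conformsTo_sub {ι : Type*} {g s x x' : ι → ℝ} (hs : 0 ≤ s) (hx : 0 ≤ x)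
    (hslack : ∀ i, s i * x' i = 0) (hconf : ConformsTo g (x - x')) (i : ι) : 0 ≤ s i * g i := by
  obtain hgi | hgi := le_or_gt 0 (g i)
  · exact mul_nonneg (hs i) hgi
  · have hlt : x i < x' i := sub_neg.1 (neg_of_mul_pos_right (hconf i hgi.ne) hgi.le)
    have hx'i : x' i ≠ 0 := ((hx i).trans_lt hlt).ne'
    rw [(mul_eq_zero.1 (hslack i)).resolve_right hx'i, zero_mul]

lemma dotProduct_nonpos_of_conformsTo_sub {α β : Type*} [Fintype β] {A : Matrix α β ℝ} {b : α → ℝ}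
    {c g x x' : β → ℝ} (hx : x ∈ feasibleSet A b)
    (hopt : IsMinOn (c ⬝ᵥ ·) (feasibleSet A b) x) (hx' : 0 ≤ x') (hg : A *ᵥ g = 0)
    (hconf : ConformsTo g (x - x')) : c ⬝ᵥ g ≤ 0 := by
  have hpos : ∀ i, 0 < g i → 0 < x i := fun i hgi =>
    (hx' i).trans_lt (sub_pos.1 (pos_of_mul_pos_right (hconf i hgi.ne') hgi.le))
  obtain ⟨ε, hε, hle⟩ := exists_pos_smul_le hx.2 hpos
  have hfeas : x - ε • g ∈ feasibleSet A b :=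
    ⟨by rw [mulVec_sub, mulVec_smul, hg, hx.1, smul_zero, sub_zero], sub_nonneg.2 hle⟩
  have hcost : c ⬝ᵥ x ≤ c ⬝ᵥ x - ε * c ⬝ᵥ g := by
    simpa only [dotProduct_sub, dotProduct_smul, smul_eq_mul] using isMinOn_iff.1 hopt _ hfeas
  exact nonpos_of_mul_nonpos_right (by linarith) hε

theorem proximity_variable_fixing_general {α β : Type} [Fintype α] [Fintype β]
    {A : Matrix α β ℝ} {b : α → ℝ} {c c' s' x : β → ℝ} (hs'nonneg : 0 ≤ s')
    (hs'dual : ∃ y : α → ℝ, s' - c' = Aᵀ *ᵥ y)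
    (hs'opt : ∃ x' ∈ feasibleSet A b, s' ⬝ᵥ x' = 0) {j : β}
    (hj : (A.rank + 1) * circImb A * ‖c - c'‖ < s' j) (hx : x ∈ feasibleSet A b)
    (hopt : IsMinOn (c ⬝ᵥ ·) (feasibleSet A b) x) : x j = 0 := by
  by_contra hxj
  obtain ⟨y, hy⟩ := hs'dual
  obtain ⟨x', hx', hs'x'⟩ := hs'opt
  have hslack := mul_eq_zero_of_dotProduct_eq_zero hs'nonneg hx'.2 hs'x'
  have hκ := circImb_nonneg A
  have hs'j : 0 < s' j := lt_of_le_of_lt (by positivity) hj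
  have hx'j : x' j = 0 := (mul_eq_zero.1 (hslack j)).resolve_left hs'j.ne'
  obtain ⟨g, hg, hgj, hconf⟩ := exists_mem_elemVecs_conformsTo (z := x - x') (j := j)
    (by rw [mulVec_sub, hx.1, hx'.1, sub_self]) (by simpa [hx'j] using hxj)
  have hgs' := mul_nonneg_of_conformsTo_sub hs'nonneg hx.2 hslack hconf
  have hgj_pos : 0 < g j := (nonneg_of_mul_nonneg_right (hgs' j) hs'j).lt_of_ne hgj.symm
  have hbound : s' j * g j ≤ (A.rank + 1) * circImb A * ‖c - c'‖ * g j := by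
    calc s' j * g j ≤ s' ⬝ᵥ g := Finset.single_le_sum (fun i _ => hgs' i) (Finset.mem_univ j)
      _ = c' ⬝ᵥ g := dotProduct_eq_of_sub_eq_transpose_mulVec hy hg.1
      _ ≤ c' ⬝ᵥ g - c ⬝ᵥ g :=
        (le_sub_self_iff _).2 <|
          dotProduct_nonpos_of_conformsTo_sub hx hopt hx'.2 hg.1 hconf
      _ = (c' - c) ⬝ᵥ g := (sub_dotProduct _ _ _).symm
      _ ≤ ‖c' - c‖ * ∑ i, |g i| := dotProduct_le_norm_mul_sum_abs _ _
      _ ≤ ‖c' - c‖ * ((A.rank + 1) * circImb A * |g j|) := by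
        gcongr; exact sum_abs_le_rank_mul_circImb hg hgj
      _ = (A.rank + 1) * circImb A * ‖c - c'‖ * g j := by
        rw [norm_sub_rev, abs_of_pos hgj_pos]; ring
  exact hj.not_ge (le_of_mul_le_mul_right hbound hgj_pos)

end LinearProgram

/-- Proximity-based variable fixing: if `s'` is an optimal dual slack for `LP(c')` and
`s'_j > (m+1) κ_A ‖c - c'‖_∞`, then `x*_j = 0` in every optimal solution of `LP(c)`. -/
theorem proximity_variable_fixing {m n : ℕ} (A : Matrix (Fin m) (Fin n) ℝ) (b : Fin m → ℝ)
    (c c' : Fin n → ℝ)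
    (P : Set (Fin n → ℝ)) (hP : P = {z : Fin n → ℝ | A.mulVec z = b ∧ 0 ≤ z})
    (hcopt : ∃ xo ∈ P, ∀ z ∈ P, c ⬝ᵥ xo ≤ c ⬝ᵥ z)
    (s' : Fin n → ℝ) (hs'nonneg : 0 ≤ s')
    (hs'dual : ∃ y : Fin m → ℝ, s' - c' = A.transpose.mulVec y)
    (hs'opt : ∃ x' ∈ P, (∀ z ∈ P, c' ⬝ᵥ x' ≤ c' ⬝ᵥ z) ∧ s' ⬝ᵥ x' = 0) :
    ∀ j : Fin n, s' j > ((m : ℝ) + 1) * circImb A * normInf (c - c') →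
      ∀ xstar ∈ P, (∀ z ∈ P, c ⬝ᵥ xstar ≤ c ⬝ᵥ z) → xstar j = 0 := by
  subst hP
  intro j hj x hx hopt
  obtain ⟨x', hx', -, hs'x'⟩ := hs'opt
  have hκ := circImb_nonneg A
  refine proximity_variable_fixing_general hs'nonneg hs'dual ⟨x', hx', hs'x'⟩
    (lt_of_le_of_lt ?_ hj) hx (isMinOn_iff.2 hopt)
  rw [normInf_eq_norm]
  gcongr
  exact A.rank_le_height
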